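/- For each i ≥ 0, the F_2-vector space N^tmf_{8i} (the span of the monomials of T of weight 8i) is finite-dimensional, and its dimension equals the number of monomials of B of weight at most 4i, i.e. dim_{F_2} N^tmf_{8i} = dim_{F_2} M_bo(4i) = Σ_{j=0}^{i} dim_{F_2} N^bo_{4j}, where N^bo_{4j} is the span of the monomials of B of weight 4j and M_bo(4i) is the span of the monomials of B of weight at most 4i. -/

import Mathlib

open MvPolynomial

noncomputable section

/-- The dual Steenrod algebra at p = 2: the polynomial algebra `F₂[ζ₁, ζ₂, …]`
over `F₂ = ZMod 2` with variables indexed by the positive integers. -/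
abbrev DualSteenrod : Type := MvPolynomial ℕ+ (ZMod 2)

/-- The weight of the monomial `ζ^I`: `ω(ζ^I) = Σᵢ Iᵢ · 2^(i-1)`. -/
def wt (I : ℕ+ →₀ ℕ) : ℕ := I.sum fun i e => e * 2 ^ ((i : ℕ) - 1)

/-- The degree of the monomial `ζ^I`: `deg(ζ^I) = Σᵢ Iᵢ · (2^i − 1)`,
coming from the grading `deg(ζᵢ) = 2^i − 1`. -/
def degW (I : ℕ+ →₀ ℕ) : ℕ := I.sum fun i e => e * (2 ^ (i : ℕ) - 1)

/-- Exponent condition cutting out `T = H_* tmf`: `8 ∣ I₁`, `4 ∣ I₂`, `2 ∣ I₃`. -/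
def Tcond (I : ℕ+ →₀ ℕ) : Prop := 8 ∣ I 1 ∧ 4 ∣ I 2 ∧ 2 ∣ I 3

/-- Exponent condition cutting out `B = H_* bo`: `4 ∣ I₁`, `2 ∣ I₂`. -/
def Bcond (I : ℕ+ →₀ ℕ) : Prop := 4 ∣ I 1 ∧ 2 ∣ I 2

/-- Exponent condition cutting out `Z = H_* HZ`: `2 ∣ I₁`. -/
def Zcond (I : ℕ+ →₀ ℕ) : Prop := 2 ∣ I 1

/-- `T = H_* tmf`: the `F₂`-span of the monomials `ζ^I` with `8 ∣ I₁`, `4 ∣ I₂`, `2 ∣ I₃`. -/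
def Tsub : Submodule (ZMod 2) DualSteenrod :=
  Submodule.span (ZMod 2) {m | ∃ I, Tcond I ∧ m = monomial I (1 : ZMod 2)}

/-- `B = H_* bo`: the `F₂`-span of the monomials `ζ^I` with `4 ∣ I₁`, `2 ∣ I₂`. -/
def Bsub : Submodule (ZMod 2) DualSteenrod :=
  Submodule.span (ZMod 2) {m | ∃ I, Bcond I ∧ m = monomial I (1 : ZMod 2)}

/-- `Z = H_* HZ`: the `F₂`-span of the monomials `ζ^I` with `2 ∣ I₁`. -/
def Zsub : Submodule (ZMod 2) DualSteenrod :=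
  Submodule.span (ZMod 2) {m | ∃ I, Zcond I ∧ m = monomial I (1 : ZMod 2)}

/-- The `F₂`-algebra homomorphism `V : A → A` with `V(ζ₁) = 1` and
`V(ζᵢ) = ζ_{i−1}` for `i ≥ 2`. -/
def V : DualSteenrod →ₐ[ZMod 2] DualSteenrod :=
  aeval fun i : ℕ+ => if i = 1 then 1 else X (i - 1)

/-- `N^tmf_{8i}`: the `F₂`-span of the monomials of `T` of weight `8i`. -/
def Ntmf (i : ℕ) : Submodule (ZMod 2) DualSteenrod :=
  Submodule.span (ZMod 2) {m | ∃ I, Tcond I ∧ wt I = 8 * i ∧ m = monomial I (1 : ZMod 2)}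

/-- `N^bo_{4j}`: the `F₂`-span of the monomials of `B` of weight `4j`. -/
def Nbo (j : ℕ) : Submodule (ZMod 2) DualSteenrod :=
  Submodule.span (ZMod 2) {m | ∃ I, Bcond I ∧ wt I = 4 * j ∧ m = monomial I (1 : ZMod 2)}

/-- `N^Z_{2k}`: the `F₂`-span of the monomials of `Z` of weight `2k`. -/
def NZ (k : ℕ) : Submodule (ZMod 2) DualSteenrod :=
  Submodule.span (ZMod 2) {m | ∃ I, Zcond I ∧ wt I = 2 * k ∧ m = monomial I (1 : ZMod 2)}

/-- `M_bo(4i)`: the `F₂`-span of the monomials of `B` of weight at most `4i`. -/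
def Mbo (i : ℕ) : Submodule (ZMod 2) DualSteenrod :=
  Submodule.span (ZMod 2) {m | ∃ I, Bcond I ∧ wt I ≤ 4 * i ∧ m = monomial I (1 : ZMod 2)}

/-- `M_HZ(2j)`: the `F₂`-span of the monomials of `Z` of weight at most `2j`
(the homology of the `j`-th integral Brown–Gitler spectrum). -/
def MHZ (j : ℕ) : Submodule (ZMod 2) DualSteenrod :=
  Submodule.span (ZMod 2) {m | ∃ I, Zcond I ∧ wt I ≤ 2 * j ∧ m = monomial I (1 : ZMod 2)}

/-- The degree-`d` homogeneous part of `N^tmf_{8i}` (degrees taken in `ℤ`). -/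
def NtmfDeg (i : ℕ) (d : ℤ) : Submodule (ZMod 2) DualSteenrod :=
  Submodule.span (ZMod 2)
    {m | ∃ I, Tcond I ∧ wt I = 8 * i ∧ (degW I : ℤ) = d ∧ m = monomial I (1 : ZMod 2)}

/-- The degree-`d` homogeneous part of `M_bo(4i)` (degrees taken in `ℤ`). -/
def MboDeg (i : ℕ) (d : ℤ) : Submodule (ZMod 2) DualSteenrod :=
  Submodule.span (ZMod 2)
    {m | ∃ I, Bcond I ∧ wt I ≤ 4 * i ∧ (degW I : ℤ) = d ∧ m = monomial I (1 : ZMod 2)}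

/-- The degree-`d` homogeneous part of `N^bo_{4j}` (degrees taken in `ℤ`). -/
def NboDeg (j : ℕ) (d : ℤ) : Submodule (ZMod 2) DualSteenrod :=
  Submodule.span (ZMod 2)
    {m | ∃ I, Bcond I ∧ wt I = 4 * j ∧ (degW I : ℤ) = d ∧ m = monomial I (1 : ZMod 2)}

/-- The degree-`d` homogeneous part of `M_HZ(2j)` (degrees taken in `ℤ`). -/
def MHZdeg (j : ℕ) (d : ℤ) : Submodule (ZMod 2) DualSteenrod :=
  Submodule.span (ZMod 2)
    {m | ∃ I, Zcond I ∧ wt I ≤ 2 * j ∧ (degW I : ℤ) = d ∧ m = monomial I (1 : ZMod 2)}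

/-- The degree-`d` homogeneous part of `T` (degrees taken in `ℤ`). -/
def Tdeg (d : ℤ) : Submodule (ZMod 2) DualSteenrod :=
  Submodule.span (ZMod 2)
    {m | ∃ I, Tcond I ∧ (degW I : ℤ) = d ∧ m = monomial I (1 : ZMod 2)}

/-! Dropping the exponent of `ζ₁` and moving every other exponent down by one (the effect of `V` on
monomials) loses only `I₁`, and `ω(ζ^I) = I₁ + 2 ω(V(ζ^I))`. So once the weight `8i` is prescribed,
`I₁ = 8i - 2 ω(V(ζ^I))` is determined. Conversely every monomial of `B` of weight at most `4i`
arises from one of `T`: weights of monomials of `B` are divisible by `4`, which makes this `I₁`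
divisible by `8`. Hence `V` matches the monomial bases of `N^tmf_{8i}` and `M_bo(4i)`, and sorting
the latter by weight gives the sum. -/

section RestrictSupport

variable {σ R : Type*} [CommSemiring R] {s : Set (σ →₀ ℕ)}

theorem finite_restrictSupport (hs : s.Finite) : Module.Finite R (restrictSupport R s) :=
  have := hs.to_subtype
  Module.Finite.of_basis (basisRestrictSupport R s)

theorem finrank_restrictSupport [StrongRankCondition R] :
    Module.finrank R (restrictSupport R s) = s.ncard :=
  Module.finrank_eq_nat_card_basis (basisRestrictSupport R s)

end RestrictSupport

theorem Ntmf_eq_restrictSupport (i : ℕ) :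
    Ntmf i = restrictSupport (ZMod 2) {I | Tcond I ∧ wt I = 8 * i} := by
  simp only [Ntmf, restrictSupport_eq_span, Set.image, Set.mem_ofPred_eq, and_assoc, eq_comm]

theorem Nbo_eq_restrictSupport (j : ℕ) :
    Nbo j = restrictSupport (ZMod 2) {I | Bcond I ∧ wt I = 4 * j} := by
  simp only [Nbo, restrictSupport_eq_span, Set.image, Set.mem_ofPred_eq, and_assoc, eq_comm]

theorem Mbo_eq_restrictSupport (i : ℕ) :
    Mbo i = restrictSupport (ZMod 2) {I | Bcond I ∧ wt I ≤ 4 * i} := by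
  simp only [Mbo, restrictSupport_eq_span, Set.image, Set.mem_ofPred_eq, and_assoc, eq_comm]

theorem finrank_Ntmf (i : ℕ) :
    Module.finrank (ZMod 2) (Ntmf i) = {I | Tcond I ∧ wt I = 8 * i}.ncard := by
  rw [Ntmf_eq_restrictSupport, finrank_restrictSupport]

theorem finrank_Nbo (j : ℕ) :
    Module.finrank (ZMod 2) (Nbo j) = {I | Bcond I ∧ wt I = 4 * j}.ncard := by
  rw [Nbo_eq_restrictSupport, finrank_restrictSupport]

theorem finrank_Mbo (i : ℕ) :
    Module.finrank (ZMod 2) (Mbo i) = {I | Bcond I ∧ wt I ≤ 4 * i}.ncard := by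
  rw [Mbo_eq_restrictSupport, finrank_restrictSupport]

theorem finite_setOf_weight_le {σ : Type*} {w : σ → ℕ} (hw : ∀ i, w i ≠ 0) {n : ℕ}
    (hn : {i | w i ≤ n}.Finite) : {I : σ →₀ ℕ | Finsupp.weight w I ≤ n}.Finite := by
  classical
  refine (Finset.finite_toSet (hn.toFinset.finsupp fun _ => Finset.Iic n)).subset fun I hI => ?_
  rw [Finset.mem_coe, Finset.mem_finsupp_iff]
  refine ⟨fun i hi => ?_, fun i _ => Finset.mem_Iic.2 ((Finsupp.le_weight w (hw i) I).trans hI)⟩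
  exact hn.mem_toFinset.2
    ((Finsupp.le_weight_of_ne_zero' w (Finsupp.mem_support_iff.1 hi)).trans hI)

theorem ncard_setOf_le_mul_eq_sum {α : Type*} {p : α → Prop} {f : α → ℕ} {d n : ℕ} (hd : 0 < d)
    (hdvd : ∀ a, p a → d ∣ f a) (hfin : {a | p a ∧ f a ≤ d * n}.Finite) :
    {a | p a ∧ f a ≤ d * n}.ncard =
      ∑ j ∈ Finset.range (n + 1), {a | p a ∧ f a = d * j}.ncard := by
  have hunion : {a | p a ∧ f a ≤ d * n} =
      ⋃ j ∈ Finset.range (n + 1), {a | p a ∧ f a = d * j} := by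
    ext a
    simp only [Set.mem_ofPred_eq, Set.mem_iUnion, Finset.mem_range, Order.lt_add_one_iff,
      exists_prop]
    constructor
    · rintro ⟨hp, hle⟩
      obtain ⟨j, hj⟩ := hdvd a hp
      exact ⟨j, le_of_mul_le_mul_left (hj ▸ hle) hd, hp, hj⟩
    · rintro ⟨j, hj, hp, hfa⟩
      exact ⟨hp, hfa ▸ Nat.mul_le_mul_left d hj⟩
  have hdisj : (Finset.range (n + 1) : Set ℕ).PairwiseDisjoint fun j => {a | p a ∧ f a = d * j} :=
    fun j _ k _ hjk => Set.disjoint_left.2 fun a hj hk =>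
      hjk (Nat.eq_of_mul_eq_mul_left hd (hj.2.symm.trans hk.2))
  rw [hunion] at hfin ⊢
  have hfiber : ∀ j ∈ Finset.range (n + 1), {a | p a ∧ f a = d * j}.Finite := fun j hj =>
    hfin.subset (Set.subset_biUnion_of_mem (u := fun j => {a | p a ∧ f a = d * j}) hj)
  rw [← finsum_mem_coe_finset]
  exact (Finset.finite_toSet _).ncard_biUnion hfiber hdisj

/-- The finitely supported function on `ℕ+` with value `a` at `1` and `J i` at `i + 1`: the
analogue for `ℕ+` of `Finsupp.cons`. On exponents it is multiplication of `ζ^J`, with all its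
variables moved up by one, by `ζ₁^a`. -/
def pnatCons {M : Type*} [AddZeroClass M] (a : M) (J : ℕ+ →₀ M) : ℕ+ →₀ M :=
  Finsupp.single 1 a + J.embDomain (addRightEmbedding 1)

/-- The finitely supported function `i ↦ I (i + 1)` on `ℕ+`: the analogue for `ℕ+` of
`Finsupp.tail`. On exponents it is the effect of `V` on monomials. -/
def pnatTail {M : Type*} [Zero M] (I : ℕ+ →₀ M) : ℕ+ →₀ M :=
  I.comapDomain (· + 1) (add_left_injective 1).injOn

section ConsTail

variable {M : Type*} [AddZeroClass M]

theorem pnatCons_one (a : M) (J : ℕ+ →₀ M) : pnatCons a J 1 = a := by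
  have : (1 : ℕ+) ∉ Set.range (addRightEmbedding (1 : ℕ+)) := fun ⟨i, hi⟩ =>
    (PNat.lt_add_left 1 i).ne' hi
  simp [pnatCons, Finsupp.embDomain_of_notMem_range _ _ _ this]

theorem pnatCons_add_one (a : M) (J : ℕ+ →₀ M) (i : ℕ+) : pnatCons a J (i + 1) = J i := by
  have hne : i + 1 ≠ 1 := (PNat.lt_add_left 1 i).ne'
  have hemb : J.embDomain (addRightEmbedding 1) (i + 1) = J i :=
    Finsupp.embDomain_apply_self (addRightEmbedding 1) J i
  rw [pnatCons, Finsupp.add_apply, Finsupp.single_eq_of_ne hne, hemb, zero_add]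

theorem pnatTail_pnatCons (a : M) (J : ℕ+ →₀ M) : pnatTail (pnatCons a J) = J :=
  Finsupp.ext fun i => pnatCons_add_one a J i

theorem pnatCons_pnatTail (I : ℕ+ →₀ M) : pnatCons (I 1) (pnatTail I) = I := by
  ext i
  induction i using PNat.recOn with
  | one => exact pnatCons_one ..
  | succ i => exact pnatCons_add_one ..

end ConsTail

theorem weight_pnatCons {R M : Type*} [Semiring R] [AddCommMonoid M] [Module R M] (w : ℕ+ → M)
    (a : R) (J : ℕ+ →₀ R) :
    Finsupp.weight w (pnatCons a J) = a • w 1 + Finsupp.weight (fun i => w (i + 1)) J := by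
  rw [pnatCons, map_add, Finsupp.weight_single]
  exact congrArg _ (Finsupp.linearCombination_embDomain ..)

theorem wt_eq_weight (I : ℕ+ →₀ ℕ) :
    wt I = Finsupp.weight (fun i : ℕ+ => 2 ^ ((i : ℕ) - 1)) I :=
  rfl

theorem finite_setOf_wt_le (n : ℕ) : {I | wt I ≤ n}.Finite := by
  refine finite_setOf_weight_le (fun i => by positivity) ?_
  refine (Set.finite_Iic n.succPNat).subset fun i (hi : 2 ^ ((i : ℕ) - 1) ≤ n) => ?_
  have hlt : (i : ℕ) - 1 < n := Nat.lt_two_pow_self.trans_le hi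
  rw [Set.mem_Iic, ← PNat.coe_le_coe, Nat.succPNat_coe]
  omega

theorem wt_pnatCons (a : ℕ) (J : ℕ+ →₀ ℕ) : wt (pnatCons a J) = a + 2 * wt J := by
  have hdouble : (fun i : ℕ+ => 2 ^ (((i + 1 : ℕ+) : ℕ) - 1)) =
      2 • fun i : ℕ+ => 2 ^ ((i : ℕ) - 1) := by
    ext i
    rw [Pi.smul_apply, smul_eq_mul, PNat.add_coe, PNat.one_coe, ← pow_succ']
    congr 1
    have := i.pos
    omega
  rw [wt_eq_weight, weight_pnatCons, hdouble]
  simp [wt, Finsupp.weight_apply, Finsupp.mul_sum, mul_left_comm]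

theorem wt_eq_add_two_mul_wt_pnatTail (I : ℕ+ →₀ ℕ) : wt I = I 1 + 2 * wt (pnatTail I) := by
  rw [← wt_pnatCons, pnatCons_pnatTail]

theorem Tcond_iff_pnatTail (I : ℕ+ →₀ ℕ) : Tcond I ↔ 8 ∣ I 1 ∧ Bcond (pnatTail I) :=
  Iff.rfl

theorem four_dvd_wt {I : ℕ+ →₀ ℕ} (hI : Bcond I) : 4 ∣ wt I := by
  obtain ⟨h₁, h₂⟩ : 4 ∣ I 1 ∧ 2 ∣ pnatTail I 1 := hI
  rw [wt_eq_add_two_mul_wt_pnatTail I, wt_eq_add_two_mul_wt_pnatTail (pnatTail I)]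
  omega

theorem bijOn_pnatTail (i : ℕ) :
    Set.BijOn pnatTail {I : ℕ+ →₀ ℕ | Tcond I ∧ wt I = 8 * i} {J | Bcond J ∧ wt J ≤ 4 * i} := by
  refine ⟨?mapsTo, ?injOn, ?surjOn⟩
  case mapsTo =>
    rintro I ⟨hT, hwt⟩
    rw [wt_eq_add_two_mul_wt_pnatTail] at hwt
    exact ⟨((Tcond_iff_pnatTail I).1 hT).2, by omega⟩
  case injOn =>
    rintro I ⟨-, hI⟩ J ⟨-, hJ⟩ htail
    have hone : I 1 = J 1 := by
      rw [wt_eq_add_two_mul_wt_pnatTail] at hI hJ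
      rw [htail] at hI
      omega
    rw [← pnatCons_pnatTail I, hone, htail, pnatCons_pnatTail]
  case surjOn =>
    rintro J ⟨hB, hwt⟩
    have hdvd := four_dvd_wt hB
    refine ⟨pnatCons (8 * i - 2 * wt J) J, ⟨?_, ?_⟩, pnatTail_pnatCons _ _⟩
    · rw [Tcond_iff_pnatTail, pnatCons_one, pnatTail_pnatCons]
      exact ⟨by omega, hB⟩
    · rw [wt_pnatCons]
      omega

/-- For each `i ≥ 0`, the space `N^tmf_{8i}` is finite dimensional, its dimension is the
number of monomials of `B` of weight at most `4i`, and
`dim N^tmf_{8i} = dim M_bo(4i) = Σ_{j=0}^{i} dim N^bo_{4j}`. -/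
theorem dim_Ntmf_eq_dim_Mbo :
    ∀ i : ℕ,
      FiniteDimensional (ZMod 2) ↥(Ntmf i) ∧
      Module.finrank (ZMod 2) ↥(Ntmf i) =
        Set.ncard {I : ℕ+ →₀ ℕ | Bcond I ∧ wt I ≤ 4 * i} ∧
      Module.finrank (ZMod 2) ↥(Ntmf i) = Module.finrank (ZMod 2) ↥(Mbo i) ∧
      Module.finrank (ZMod 2) ↥(Mbo i) =
        ∑ j ∈ Finset.range (i + 1), Module.finrank (ZMod 2) ↥(Nbo j) := by
  intro i
  have hTfin : {I | Tcond I ∧ wt I = 8 * i}.Finite :=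
    (finite_setOf_wt_le (8 * i)).subset fun I hI => hI.2.le
  have hBfin : {I | Bcond I ∧ wt I ≤ 4 * i}.Finite :=
    (finite_setOf_wt_le (4 * i)).subset fun I hI => hI.2
  have hcard : {I | Tcond I ∧ wt I = 8 * i}.ncard = {I | Bcond I ∧ wt I ≤ 4 * i}.ncard :=
    (bijOn_pnatTail i).ncard_eq
  refine ⟨?_, ?_, ?_, ?_⟩
  · rw [Ntmf_eq_restrictSupport]
    exact finite_restrictSupport hTfin
  · rw [finrank_Ntmf, hcard]
  · rw [finrank_Ntmf, finrank_Mbo, hcard]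
  · simp only [finrank_Mbo, finrank_Nbo]
    exact ncard_setOf_le_mul_eq_sum four_pos (fun _ => four_dvd_wt) hBfin
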